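/- The projectors D^{RC} satisfy D^{RC} D^{R'C'} = δ_{(R,C),(R',C')} D^{RC} for all pairs (C, R) and (C', R'), and Σ_C Σ_{R∈Irr(N_C)} D^{RC} = 1, the sum running over all conjugacy classes C of G and, for each C, over a complete set Irr(N_C) of pairwise inequivalent irreducible unitary matrix representations of N_C. -/

import Mathlib

set_option linter.all false
section WignerAux

open Matrix

variable {H : Type*} [Group H] [Fintype H]

theorem aux_star_eq {a : ℕ} (R : H →* Matrix (Fin a) (Fin a) ℂ)
    (hu : ∀ m, R m * star (R m) = 1) (m : H) : star (R m) = R m⁻¹ := by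
  have h1 : R m⁻¹ * R m = 1 := by rw [← map_mul]; simp
  calc star (R m) = (R m⁻¹ * R m) * star (R m) := by rw [h1, one_mul]
    _ = R m⁻¹ := by rw [mul_assoc, hu, mul_one]

theorem aux_star_trace {a : ℕ} (R : H →* Matrix (Fin a) (Fin a) ℂ)
    (hu : ∀ m, R m * star (R m) = 1) (m : H) :
    star (trace (R m)) = trace (R m⁻¹) := by
  rw [← aux_star_eq R hu, star_eq_conjTranspose, trace_conjTranspose]

theorem aux_intertwine {a b : ℕ} (R : H →* Matrix (Fin a) (Fin a) ℂ)
    (R' : H →* Matrix (Fin b) (Fin b) ℂ) (M : Matrix (Fin a) (Fin b) ℂ) (h : H) :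
    R h * (∑ m, R m * M * R' m⁻¹) = (∑ m, R m * M * R' m⁻¹) * R' h := by
  rw [Matrix.mul_sum, Matrix.sum_mul]
  refine Fintype.sum_equiv (Equiv.mulLeft h) _ _ fun m => ?_
  simp only [Equiv.coe_mulLeft, _root_.mul_inv_rev, map_mul, Matrix.mul_assoc]
  rw [← map_mul R' h⁻¹ h]
  simp

theorem aux_schur_ne {a b : ℕ} (R : H →* Matrix (Fin a) (Fin a) ℂ)
    (R' : H →* Matrix (Fin b) (Fin b) ℂ)
    (hu : ∀ m, R m * star (R m) = 1) (hu' : ∀ m, R' m * star (R' m) = 1)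
    (hi : ∀ M : Matrix (Fin a) (Fin a) ℂ, (∀ m, R m * M = M * R m) → ∃ z : ℂ, M = z • 1)
    (hi' : ∀ M : Matrix (Fin b) (Fin b) ℂ, (∀ m, R' m * M = M * R' m) → ∃ z : ℂ, M = z • 1)
    (hne : ¬ ∀ m, trace (R m) = trace (R' m)) (M : Matrix (Fin a) (Fin b) ℂ) :
    ∑ m, R m * M * R' m⁻¹ = 0 := by
  have hT := aux_intertwine R R' M
  generalize (∑ m, R m * M * R' m⁻¹) = T at hT ⊢
  have hT' : ∀ h, R' h * Tᴴ = Tᴴ * R h := by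
    intro h
    have := congrArg conjTranspose (hT h⁻¹)
    rw [conjTranspose_mul, conjTranspose_mul, ← star_eq_conjTranspose (R h⁻¹),
      ← star_eq_conjTranspose (R' h⁻¹), aux_star_eq R hu, aux_star_eq R' hu', inv_inv] at this
    exact this.symm
  obtain ⟨z, hz⟩ := hi (T * Tᴴ) fun m => by
    rw [← Matrix.mul_assoc, hT, Matrix.mul_assoc, hT', Matrix.mul_assoc]
  obtain ⟨z', hz'⟩ := hi' (Tᴴ * T) fun m => by
    rw [← Matrix.mul_assoc, hT', Matrix.mul_assoc, hT, Matrix.mul_assoc]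
  by_contra hT0
  have hzz : z = z' := by
    have h1 : z • T = z' • T := by
      calc z • T = (T * Tᴴ) * T := by rw [hz]; simp
        _ = z' • T := by rw [Matrix.mul_assoc, hz']; simp
    exact smul_left_injective ℂ hT0 h1
  subst hzz
  have hz0 : z ≠ 0 := by
    rintro rfl
    rw [zero_smul] at hz
    open ComplexOrder in
    exact hT0 (Matrix.self_mul_conjTranspose_eq_zero.mp hz)
  apply hne
  intro m
  have h1 : z * trace (R m) = z * trace (R' m) := by
    calc z * trace (R m) = trace (R m * (T * Tᴴ)) := by rw [hz]; simp
      _ = trace (R' m * (Tᴴ * T)) := by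
        rw [← Matrix.mul_assoc, hT, Matrix.mul_assoc, trace_mul_comm, Matrix.mul_assoc]
      _ = z * trace (R' m) := by rw [hz']; simp
  exact mul_left_cancel₀ hz0 h1

theorem aux_schur_eq {a : ℕ} (R : H →* Matrix (Fin a) (Fin a) ℂ)
    (hi : ∀ M : Matrix (Fin a) (Fin a) ℂ, (∀ m, R m * M = M * R m) → ∃ z : ℂ, M = z • 1)
    (M : Matrix (Fin a) (Fin a) ℂ) :
    (a : ℂ) • ∑ m, R m * M * R m⁻¹ = ((Fintype.card H : ℂ) * trace M) • 1 := by
  obtain ⟨z, hz⟩ := hi _ (aux_intertwine R R M)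
  have h1 : trace (∑ m, R m * M * R m⁻¹) = Fintype.card H * trace M := by
    rw [trace_sum]
    have : ∀ m, trace (R m * M * R m⁻¹) = trace M := by
      intro m
      rw [trace_mul_comm, ← Matrix.mul_assoc, ← map_mul]; simp
    simp [this]
  rw [hz] at h1 ⊢
  rw [← h1, smul_smul, trace_smul, trace_one, Fintype.card_fin, smul_eq_mul, mul_comm]

theorem aux_trace_sum {a b : ℕ} (R : H →* Matrix (Fin a) (Fin a) ℂ)
    (R' : H →* Matrix (Fin b) (Fin b) ℂ) (k l : Fin b) :
    (∑ m, trace (R m) • R' m⁻¹) k l =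
      ∑ i : Fin a, (∑ m, R m * single i k (1 : ℂ) * R' m⁻¹ : Matrix (Fin a) (Fin b) ℂ) i l := by
  simp only [Matrix.sum_apply, Matrix.smul_apply, smul_eq_mul, trace, Finset.sum_mul, diag_apply]
  rw [Finset.sum_comm]
  refine Finset.sum_congr rfl fun i _ => Finset.sum_congr rfl fun m _ => ?_
  rw [Matrix.mul_apply, Finset.sum_eq_single k]
  · simp
  · intro j _ hj; simp [Matrix.mul_apply, single, Ne.symm hj]
  · simp

/-- Inequivalent characters: the weighted sum vanishes. -/
theorem aux_proj_ne {a b : ℕ} (R : H →* Matrix (Fin a) (Fin a) ℂ)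
    (R' : H →* Matrix (Fin b) (Fin b) ℂ)
    (hu : ∀ m, R m * star (R m) = 1) (hu' : ∀ m, R' m * star (R' m) = 1)
    (hi : ∀ M : Matrix (Fin a) (Fin a) ℂ, (∀ m, R m * M = M * R m) → ∃ z : ℂ, M = z • 1)
    (hi' : ∀ M : Matrix (Fin b) (Fin b) ℂ, (∀ m, R' m * M = M * R' m) → ∃ z : ℂ, M = z • 1)
    (hne : ¬ ∀ m, trace (R m) = trace (R' m)) :
    ∑ m, trace (R m) • R' m⁻¹ = 0 := by
  ext k l
  rw [aux_trace_sum]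
  simp [aux_schur_ne R R' hu hu' hi hi' hne]

theorem aux_proj_eq {a : ℕ} (R : H →* Matrix (Fin a) (Fin a) ℂ)
    (hi : ∀ M : Matrix (Fin a) (Fin a) ℂ, (∀ m, R m * M = M * R m) → ∃ z : ℂ, M = z • 1) :
    (a : ℂ) • ∑ m, trace (R m) • R m⁻¹ = (Fintype.card H : ℂ) • 1 := by
  ext k l
  rw [Matrix.smul_apply, aux_trace_sum, Finset.smul_sum]
  have : ∀ i, (a : ℂ) • (∑ m, R m * single i k (1 : ℂ) * R m⁻¹) i l =
      (((Fintype.card H : ℂ) * trace (single i k (1 : ℂ))) • (1 : Matrix _ _ ℂ)) i l := by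
    intro i
    rw [← aux_schur_eq R hi, Matrix.smul_apply]
  simp only [this]
  rw [Finset.sum_eq_single k]
  · simp
  · intro i _ hik; simp [trace_single_eq_of_ne _ _ _ hik]
  · simp

/-- Star version of the weighted sum. -/
theorem aux_pstar {a b : ℕ} (R : H →* Matrix (Fin a) (Fin a) ℂ)
    (R' : H →* Matrix (Fin b) (Fin b) ℂ)
    (hu : ∀ m, R m * star (R m) = 1) :
    ∑ m, star (trace (R m)) • R' m = ∑ m, trace (R m) • R' m⁻¹ := by
  refine Fintype.sum_equiv (Equiv.inv H) _ _ fun m => ?_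
  simp [aux_star_trace R hu, -RCLike.star_def]

theorem aux_conv {a b : ℕ} (R : H →* Matrix (Fin a) (Fin a) ℂ)
    (R' : H →* Matrix (Fin b) (Fin b) ℂ) (p : H) :
    ∑ m, star (trace (R m)) * star (trace (R' (m⁻¹ * p))) =
      star (trace ((∑ m, trace (R m) • R' m⁻¹) * R' p)) := by
  rw [Finset.sum_mul, trace_sum, star_sum]
  refine Finset.sum_congr rfl fun m _ => ?_
  rw [smul_mul_assoc, trace_smul, ← map_mul, smul_eq_mul, star_mul']

end WignerAux
section WignerAux2

open Matrix

variable {H : Type*} [Group H] [Fintype H]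

theorem aux_exists_min {E : Type*} [AddCommGroup E] [Module ℂ E] [FiniteDimensional ℂ E]
    (ρ : H →* Module.End ℂ E) (V : Submodule ℂ E) (hV : V ≠ ⊥)
    (hinv : ∀ m, ∀ x ∈ V, ρ m x ∈ V) :
    ∃ W : Submodule ℂ E, W ≤ V ∧ W ≠ ⊥ ∧ (∀ m, ∀ x ∈ W, ρ m x ∈ W) ∧
      ∀ U : Submodule ℂ E, U ≤ W → U ≠ ⊥ → (∀ m, ∀ x ∈ U, ρ m x ∈ U) → U = W := by
  obtain ⟨W, ⟨h1, h2, h3⟩, h4⟩ := wellFounded_lt.has_min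
    {W : Submodule ℂ E | W ≤ V ∧ W ≠ ⊥ ∧ (∀ m, ∀ x ∈ W, ρ m x ∈ W)} ⟨V, le_rfl, hV, hinv⟩
  refine ⟨W, h1, h2, h3, fun U hU hU0 hUi => ?_⟩
  by_contra hne
  exact h4 U ⟨hU.trans h1, hU0, hUi⟩ (lt_of_le_of_ne hU hne)

/-- A family of coefficients acting as identity on all irreducible unitary matrix representations
acts as the identity on all unitary representations. -/
theorem aux_complete {E : Type*} [NormedAddCommGroup E] [InnerProductSpace ℂ E]
    [FiniteDimensional ℂ E]
    (ρ : H →* Module.End ℂ E) (hρ : ∀ m x y, inner ℂ (ρ m x) (ρ m y) = inner ℂ x y)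
    (f : H → ℂ) (hf : ∀ g h, f (h * g * h⁻¹) = f g)
    (hirr : ∀ d' : ℕ, 0 < d' → ∀ R' : H →* Matrix (Fin d') (Fin d') ℂ,
        (∀ m, R' m * star (R' m) = 1) →
        (∀ M : Matrix (Fin d') (Fin d') ℂ,
          (∀ m, R' m * M = M * R' m) → ∃ z : ℂ, M = z • 1) →
        ∑ m, f m • R' m = 1) : ∑ m, f m • ρ m = 1 := by
  set F : Module.End ℂ E := ∑ m, f m • ρ m with hF
  have hcomm : ∀ h, ρ h * F = F * ρ h := by
    intro h
    rw [hF, Finset.mul_sum, Finset.sum_mul]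
    refine Fintype.sum_equiv (MulAut.conj h).toEquiv _ _ fun m => ?_
    simp only [MulEquiv.toEquiv_eq_coe, EquivLike.coe_coe, MulAut.conj_apply, hf,
      mul_smul_comm, smul_mul_assoc, ← map_mul]
    simp
  set V := LinearMap.ker (F - 1) with hVdef
  have hVmem : ∀ x, x ∈ V ↔ F x = x := by
    intro x; simp [hVdef, sub_eq_zero]
  have hVinv : ∀ m, ∀ x ∈ V, ρ m x ∈ V := by
    intro m x hx
    rw [hVmem] at hx ⊢
    have := LinearMap.congr_fun (hcomm m) x
    simp only [Module.End.mul_apply] at this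
    rw [← this, hx]
  have hinvl : ∀ m x, ρ m⁻¹ (ρ m x) = x := by
    intro m x
    rw [← Module.End.mul_apply, ← map_mul]; simp
  have hVperp : ∀ m, ∀ x ∈ Vᗮ, ρ m x ∈ Vᗮ := by
    intro m x hx
    rw [Submodule.mem_orthogonal] at hx ⊢
    intro u hu
    rw [← hρ m⁻¹, hinvl]
    exact hx _ (hVinv _ _ hu)
  have hbot : Vᗮ = ⊥ := by
    by_contra hne
    obtain ⟨W, hWV, hW0, hWi, hWmin⟩ := aux_exists_min ρ _ hne hVperp
    let σ : H →* Module.End ℂ W :=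
      { toFun := fun m => (ρ m).restrict (hWi m)
        map_one' := by ext x; simp
        map_mul' := by intro a b; ext x; simp }
    have hσ : ∀ m (x : W), ((σ m x : W) : E) = ρ m x := fun m x => rfl
    let b := stdOrthonormalBasis ℂ W
    let φ := LinearMap.toMatrixOrthonormal b
    let R' : H →* Matrix (Fin (Module.finrank ℂ W)) (Fin (Module.finrank ℂ W)) ℂ :=
      { toFun := fun m => φ (σ m)
        map_one' := by rw [map_one, map_one]
        map_mul' := by intro a b; rw [map_mul, map_mul] }
    have hR' : ∀ m, R' m = φ (σ m) := fun m => rfl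
    have hadj : ∀ m, star (σ m) = σ m⁻¹ := by
      intro m
      rw [LinearMap.star_eq_adjoint]
      symm
      rw [LinearMap.eq_adjoint_iff]
      intro x y
      rw [Submodule.coe_inner, Submodule.coe_inner, hσ, hσ, ← hρ m]
      congr 1
      rw [← Module.End.mul_apply, ← map_mul]; simp
    have : Nontrivial W := Submodule.nontrivial_iff_ne_bot.mpr hW0
    have key := hirr (Module.finrank ℂ W) Module.finrank_pos R' (fun m => by
        rw [hR', ← map_star, hadj, ← map_mul, ← map_mul]; simp) (fun M hM => by
        obtain ⟨T, rfl⟩ := EquivLike.surjective φ M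
        have hT : ∀ m, σ m * T = T * σ m := by
          intro m
          apply EquivLike.injective φ
          rw [map_mul, map_mul]; exact hM m
        obtain ⟨z, hz⟩ := Module.End.exists_eigenvalue T
        refine ⟨z, ?_⟩
        have hU := hWmin ((Module.End.eigenspace T z).map W.subtype) (Submodule.map_subtype_le _ _)
          (by
            intro h0
            apply hz
            apply Submodule.map_injective_of_injective W.injective_subtype
            rw [Submodule.map_bot]
            exact h0)
          (by
            rintro m _ ⟨x, hx, rfl⟩
            refine ⟨σ m x, ?_, rfl⟩
            have hx' : T x = z • x := Module.End.mem_eigenspace_iff.mp hx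
            refine Module.End.mem_eigenspace_iff.mpr ?_
            rw [← Module.End.mul_apply, ← hT, Module.End.mul_apply, hx', map_smul])
        have hTz : T = z • 1 := by
          ext1 x
          have hx : (x : E) ∈ (Module.End.eigenspace T z).map W.subtype := by
            rw [hU]; exact x.2
          obtain ⟨y, hy, hyx⟩ := hx
          have : y = x := Subtype.ext hyx
          subst this
          exact Module.End.mem_eigenspace_iff.mp hy
        rw [hTz, map_smul, map_one])
    have key2 : ∑ m, f m • σ m = 1 := by
      apply EquivLike.injective φ
      rw [map_sum, map_one, ← key]
      exact Finset.sum_congr rfl fun m _ => by rw [map_smul, hR']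
    obtain ⟨x, hx0⟩ := exists_ne (0 : W)
    apply hx0
    have hFx : F x = x := by
      have := congrArg (Subtype.val) (LinearMap.congr_fun key2 x)
      simpa [hF, LinearMap.sum_apply, hσ] using this
    have h1 : (x : E) ∈ V := (hVmem _).2 hFx
    have h2 : (x : E) ∈ Vᗮ := hWV x.2
    have := (Submodule.mem_orthogonal _ _).1 h2 _ h1
    exact Subtype.ext (inner_self_eq_zero.mp this)
  have htop : V = ⊤ := by
    rwa [Submodule.orthogonal_eq_bot_iff] at hbot
  ext1 x
  have : x ∈ V := by rw [htop]; trivial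
  simpa using (hVmem x).1 this

theorem aux_delta [DecidableEq H] (f : H → ℂ) (hf : ∀ g h, f (h * g * h⁻¹) = f g)
    (hirr : ∀ d' : ℕ, 0 < d' → ∀ R' : H →* Matrix (Fin d') (Fin d') ℂ,
        (∀ m, R' m * star (R' m) = 1) →
        (∀ M : Matrix (Fin d') (Fin d') ℂ,
          (∀ m, R' m * M = M * R' m) → ∃ z : ℂ, M = z • 1) →
        ∑ m, f m • R' m = 1) (p : H) : f p = if p = 1 then 1 else 0 := by
  let ρ : H →* Module.End ℂ (EuclideanSpace ℂ H) :=
    { toFun := fun m =>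
        (LinearIsometryEquiv.piLpCongrLeft 2 ℂ ℂ (Equiv.mulLeft m)).toLinearEquiv.toLinearMap
      map_one' := by
        ext x i
        simp [LinearIsometryEquiv.piLpCongrLeft_apply, Equiv.piCongrLeft'_apply]
        rfl
      map_mul' := by
        intro a b
        ext x i
        change x ((a * b)⁻¹ * i) = x (b⁻¹ * (a⁻¹ * i))
        rw [_root_.mul_inv_rev, mul_assoc] }
  have h := aux_complete ρ (fun m x y => LinearIsometryEquiv.inner_map_map _ x y) f hf hirr
  have h2 := congrArg (fun v : EuclideanSpace ℂ H => v p)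
    (LinearMap.congr_fun h (EuclideanSpace.single (1 : H) (1 : ℂ)))
  have h3 : ∀ m, ρ m (EuclideanSpace.single (1 : H) (1 : ℂ)) = EuclideanSpace.single m 1 := by
    intro m
    change LinearIsometryEquiv.piLpCongrLeft 2 ℂ ℂ (Equiv.mulLeft m) _ = _
    simp
  simp only [LinearMap.sum_apply, LinearMap.smul_apply, h3] at h2
  simpa [Pi.single_apply] using h2

theorem aux_char_complete [DecidableEq H] (n : ℕ) (d : Fin n → ℕ)
    (R : ∀ t, H →* Matrix (Fin (d t)) (Fin (d t)) ℂ)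
    (hu : ∀ t m, R t m * star (R t m) = 1)
    (hi : ∀ t (M : Matrix (Fin (d t)) (Fin (d t)) ℂ),
      (∀ m, R t m * M = M * R t m) → ∃ z : ℂ, M = z • 1)
    (hdist : ∀ t t', (∀ m, trace (R t m) = trace (R t' m)) → t = t')
    (hcomp : ∀ d' : ℕ, 0 < d' → ∀ R' : H →* Matrix (Fin d') (Fin d') ℂ,
        (∀ m, R' m * star (R' m) = 1) →
        (∀ M : Matrix (Fin d') (Fin d') ℂ,
          (∀ m, R' m * M = M * R' m) → ∃ z : ℂ, M = z • 1) →
        ∃ t, ∀ m, trace (R' m) = trace (R t m)) (p : H) :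
    ∑ t, ((d t : ℂ) / (Fintype.card H : ℂ)) * star (trace (R t p)) = if p = 1 then 1 else 0 := by
  have hcard : (Fintype.card H : ℂ) ≠ 0 := by exact_mod_cast Fintype.card_ne_zero
  refine aux_delta (fun p => ∑ t, ((d t : ℂ) / (Fintype.card H : ℂ)) * star (trace (R t p)))
    ?_ ?_ p
  · intro g h
    refine Finset.sum_congr rfl fun t _ => ?_
    congr 2
    rw [map_mul, trace_mul_comm, ← map_mul]
    congr 2
    group
  · intro d' hd' R' hu' hi'
    obtain ⟨t, ht⟩ := hcomp d' hd' R' hu' hi'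
    have hdt : (d' : ℂ) = d t := by simpa using ht 1
    simp only [Finset.sum_smul, mul_smul]
    rw [Finset.sum_comm]
    simp only [← Finset.smul_sum]
    rw [Finset.sum_eq_single t]
    · simp only [← ht]
      rw [aux_pstar R' R' hu', div_eq_inv_mul, mul_smul, ← hdt, aux_proj_eq R' hi', smul_smul,
        inv_mul_cancel₀ hcard, one_smul]
    · intro s _ hst
      rw [aux_pstar (R s) R' (hu s), aux_proj_ne (R s) R' (hu s) hu' (hi s) hi', smul_zero]
      intro h
      exact hst (hdist _ _ fun m => (h m).trans (ht m))
    · simp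

end WignerAux2

/-- The projectors `D^{RC}` (over all conjugacy classes `C` of `G` and all
irreducible unitary representations `R` of `N_C` from a complete set `Irr(N_C)` of pairwise
inequivalent ones) satisfy `D^{RC} D^{R'C'} = δ_{(R,C),(R',C')} D^{RC}` and sum to `1`.
Conjugacy classes are encoded by a complete family `r : Fin K → G` of pairwise non-conjugate
representatives; inequivalence and completeness of the irreducible representations are encoded
through characters (two irreducible complex representations of a finite group are equivalent
iff they have the same character). -/
theorem quantum_double_Wigner_projectors_complete
    {G : Type*} [Group G] [Fintype G] [DecidableEq G]
    {𝒜 : Type*} [Ring 𝒜] [Algebra ℂ 𝒜] [StarRing 𝒜] [StarModule ℂ 𝒜]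
    (A B : G → 𝒜)
    (hA1 : A 1 = 1)
    (hAmul : ∀ h h' : G, A h * A h' = A (h * h'))
    (hAstar : ∀ h : G, star (A h) = A h⁻¹)
    (hBstar : ∀ g : G, star (B g) = B g)
    (hBmul : ∀ g g' : G, B g * B g' = if g = g' then B g else 0)
    (hBsum : ∑ g : G, B g = 1)
    (hAB : ∀ h g : G, A h * B g = B (h * g * h⁻¹) * A h)
    -- a complete set `r k` of representatives of the conjugacy classes of `G`
    (K : ℕ) (r : Fin K → G)
    (hrdistinct : ∀ k k', IsConj (r k) (r k') → k = k')
    (hrcomplete : ∀ g : G, ∃ k, IsConj (r k) g)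
    -- for each class: its elements `c k i` and iterators `q k i`
    (nC : Fin K → ℕ) (c : ∀ k, Fin (nC k) → G) (q : ∀ k, Fin (nC k) → G)
    (hcinj : ∀ k, Function.Injective (c k))
    (hcclass : ∀ k (g : G), IsConj (r k) g ↔ ∃ i, c k i = g)
    (hq : ∀ k i, c k i = q k i * r k * (q k i)⁻¹)
    -- the centralizers `N_C`
    (N : Fin K → Subgroup G) [∀ k, Fintype (N k)]
    (hN : ∀ k, N k = Subgroup.centralizer {r k})
    -- a complete set of pairwise inequivalent irreducible unitary representations of each `N_C`
    (nI : Fin K → ℕ) (d : ∀ k, Fin (nI k) → ℕ) (hd : ∀ k t, 0 < d k t)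
    (R : ∀ k, ∀ t : Fin (nI k), N k →* Matrix (Fin (d k t)) (Fin (d k t)) ℂ)
    (hRunitary : ∀ k t m, R k t m * star (R k t m) = 1)
    (hRirr : ∀ k t (M : Matrix (Fin (d k t)) (Fin (d k t)) ℂ),
      (∀ m, R k t m * M = M * R k t m) → ∃ z : ℂ, M = z • 1)
    (hRdistinct : ∀ k (t t' : Fin (nI k)),
      (∀ m, Matrix.trace (R k t m) = Matrix.trace (R k t' m)) → t = t')
    (hRcomplete : ∀ k (d' : ℕ), 0 < d' →
      ∀ R' : N k →* Matrix (Fin d') (Fin d') ℂ,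
        (∀ m, R' m * star (R' m) = 1) →
        (∀ M : Matrix (Fin d') (Fin d') ℂ,
          (∀ m, R' m * M = M * R' m) → ∃ z : ℂ, M = z • 1) →
        ∃ t, ∀ m, Matrix.trace (R' m) = Matrix.trace (R k t m))
    -- the Wigner projectors `D^{RC}`
    (D : ∀ k, Fin (nI k) → 𝒜)
    (hD : ∀ k t, D k t = ((d k t : ℂ) / (Fintype.card (N k) : ℂ)) •
      ∑ m : N k, star (Matrix.trace (R k t m)) •
        ∑ i : Fin (nC k), A (q k i * (m : G) * (q k i)⁻¹) * B (c k i)) :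
    (∀ k t k' t', D k t * D k' t' =
      if (⟨k, t⟩ : Σ k, Fin (nI k)) = ⟨k', t'⟩ then D k t else 0) ∧
    ∑ x : Σ k, Fin (nI k), D x.1 x.2 = 1 := by
  classical
  have hNcomm : ∀ k (m : N k), (m : G) * r k = r k * m := by
    intro k m
    have h0 : ∀ g ∈ N k, g * r k = r k * g := by
      intro g hg
      rw [hN, Subgroup.mem_centralizer_singleton_iff] at hg
      first | exact hg | exact hg.symm
    exact h0 m m.2
  obtain ⟨E, hE⟩ : ∃ E : ∀ k, N k → 𝒜, ∀ k m, E k m =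
      ∑ i : Fin (nC k), A (q k i * (m : G) * (q k i)⁻¹) * B (c k i) := ⟨_, fun _ _ => rfl⟩
  have hAB' : ∀ k (m : N k) i, A (q k i * (m : G) * (q k i)⁻¹) * B (c k i) =
      B (c k i) * A (q k i * (m : G) * (q k i)⁻¹) := by
    intro k m i
    rw [hAB]
    congr 2
    rw [hq]
    have h1 : (m : G) * r k * (m : G)⁻¹ = r k := by rw [hNcomm]; group
    calc _ = q k i * ((m : G) * r k * (m : G)⁻¹) * (q k i)⁻¹ := by group
      _ = _ := by rw [h1]
  have hterm : ∀ k (m : N k) i k' (n : N k') j,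
      (A (q k i * (m : G) * (q k i)⁻¹) * B (c k i)) *
        (A (q k' j * (n : G) * (q k' j)⁻¹) * B (c k' j)) =
      A (q k i * (m : G) * (q k i)⁻¹) * (B (c k i) * B (c k' j)) *
        A (q k' j * (n : G) * (q k' j)⁻¹) := by
    intro k m i k' n j
    rw [hAB' k' n j]
    simp only [mul_assoc]
  have hcc : ∀ k i, IsConj (r k) (c k i) := fun k i => (hcclass k _).2 ⟨i, rfl⟩
  have hEne : ∀ k k' (m : N k) (n : N k'), k ≠ k' → E k m * E k' n = 0 := by
    intro k k' m n hk
    rw [hE, hE, Finset.sum_mul_sum]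
    refine Finset.sum_eq_zero fun i _ => Finset.sum_eq_zero fun j _ => ?_
    rw [hterm, hBmul, if_neg]
    · simp
    · intro h
      exact hk (hrdistinct _ _ ((hcc k i).trans (h ▸ (hcc k' j).symm)))
  have hEmul : ∀ k (m n : N k), E k m * E k n = E k (m * n) := by
    intro k m n
    rw [hE, hE, hE, Finset.sum_mul_sum]
    refine Finset.sum_congr rfl fun i _ => ?_
    rw [Finset.sum_eq_single i]
    · rw [hterm, hBmul, if_pos rfl, mul_assoc, ← hAB', ← mul_assoc, hAmul]
      congr 2
      push_cast
      group
    · intro j _ hj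
      rw [hterm, hBmul, if_neg]
      · simp
      · intro h
        exact hj (hcinj k h).symm
    · simp
  have hEone : ∑ k, E k 1 = 1 := by
    rw [← hBsum]
    have h1 : ∀ k, E k 1 = ∑ i, B (c k i) := by
      intro k
      rw [hE]
      refine Finset.sum_congr rfl fun i _ => ?_
      simp [hA1]
    simp only [h1]
    rw [← Fintype.sum_sigma (fun x : Σ k, Fin (nC k) => B (c x.1 x.2))]
    refine Fintype.sum_bijective (fun x : Σ k, Fin (nC k) => c x.1 x.2) ⟨?_, ?_⟩ _ _ fun _ => rfl
    · rintro ⟨k, i⟩ ⟨k', j⟩ h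
      have h' : c k i = c k' j := h
      have hk : k = k' := hrdistinct _ _ ((hcc k i).trans (h' ▸ (hcc k' j).symm))
      subst hk
      rw [hcinj k h']
    · intro g
      obtain ⟨k, hk⟩ := hrcomplete g
      obtain ⟨i, hi⟩ := (hcclass k g).1 hk
      exact ⟨⟨k, i⟩, hi⟩
  have hD' : ∀ k t, D k t = ((d k t : ℂ) / (Fintype.card (N k) : ℂ)) •
      ∑ m : N k, star (Matrix.trace (R k t m)) • E k m := by
    intro k t
    simp only [hD, hE]
  have hcard : ∀ k, (Fintype.card (N k) : ℂ) ≠ 0 := fun k => by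
    exact_mod_cast Fintype.card_ne_zero
  refine ⟨?_, ?_⟩
  · intro k t k' t'
    by_cases hk : k = k'
    · subst hk
      have hconv : D k t * D k t' = (((d k t' : ℂ) / (Fintype.card (N k) : ℂ)) *
          ((d k t : ℂ) / (Fintype.card (N k) : ℂ))) •
          ∑ p : N k, star (Matrix.trace ((∑ m, Matrix.trace (R k t m) • R k t' m⁻¹) * R k t' p)) •
            E k p := by
        rw [hD', hD', smul_mul_assoc, mul_smul_comm, smul_smul, mul_comm (_ / _), Finset.sum_mul]
        congr 1
        simp only [← aux_conv (R k t) (R k t'), Finset.sum_smul]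
        rw [Finset.sum_comm]
        refine Finset.sum_congr rfl fun m _ => ?_
        rw [Finset.mul_sum]
        refine Fintype.sum_equiv (Equiv.mulLeft m) _ _ fun n => ?_
        rw [smul_mul_smul_comm, hEmul]
        simp
      by_cases ht : t = t'
      · subst ht
        have h1 := aux_proj_eq (R k t) (hRirr k t)
        have h2 : ∀ p, (d k t : ℂ) *
            star (Matrix.trace ((∑ m, Matrix.trace (R k t m) • R k t m⁻¹) * R k t p)) =
            (Fintype.card (N k) : ℂ) * star (Matrix.trace (R k t p)) := by
          intro p
          have h3 := congrArg (fun X => star (Matrix.trace (X * R k t p))) h1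
          simpa only [smul_mul_assoc, Matrix.trace_smul, smul_eq_mul, star_mul', star_natCast,
            one_mul] using h3
        rw [if_pos rfl, hconv, hD', Finset.smul_sum, Finset.smul_sum]
        refine Finset.sum_congr rfl fun p _ => ?_
        rw [smul_smul, smul_smul]
        congr 1
        rw [mul_assoc, div_mul_eq_mul_div (d k t : ℂ) _ (star _), h2,
          mul_div_cancel_left₀ _ (hcard k)]
      · rw [if_neg (by intro h; exact ht (by simpa using h)), hconv,
          aux_proj_ne (R k t) (R k t') (hRunitary k t) (hRunitary k t') (hRirr k t) (hRirr k t')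
            (fun h => ht (hRdistinct k t t' h))]
        simp
    · rw [if_neg (by intro h; exact hk (congrArg Sigma.fst h)), hD', hD', smul_mul_assoc,
        mul_smul_comm, Finset.sum_mul_sum]
      rw [Finset.sum_eq_zero, smul_zero, smul_zero]
      intro m _
      refine Finset.sum_eq_zero fun n _ => ?_
      rw [smul_mul_smul_comm, hEne _ _ _ _ hk, smul_zero]
  · rw [← hEone, Fintype.sum_sigma]
    refine Finset.sum_congr rfl fun k _ => ?_
    have h1 := aux_char_complete (nI k) (d k) (R k) (hRunitary k) (hRirr k) (hRdistinct k)
      (hRcomplete k)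
    simp only [hD', Finset.smul_sum, smul_smul]
    rw [Finset.sum_comm]
    simp only [← Finset.sum_smul, h1]
    simp
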